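/- arXiv:2103.14109 — 4 statements merged into one kernel-verified Lean document; each statement's English description precedes it below -/
import Mathlib

section
/- The function f is strictly concave on (0, ∞); equivalently, its second derivative satisfies f''(x) < 0 for all x > 0. -/
/-!
Write `s = √(x⁴ + 1)` and `I(x) = ∫_x^∞ dt/√(t⁴ + 1)`, so that `I' = -1/s`. After using
`s² = x⁴ + 1`, the terms of `f'` collapse to `(8/3)(x³ - x s) + (4/3) I`, and differentiating
again gives `f'' = (8/s)(x² s - x⁴ - 1/2)`. This is negative because
`(x² s)² = x⁸ + x⁴ < (x⁴ + 1/2)²`. The formulas hold on all of `ℝ`; strict concavity follows from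
the sign of `f''`.
-/

open Real MeasureTheory

/-- The metric function `f` of the Einstein-Born-Infeld black hole:
`f(x) = (2/3)*(x^4 - x^2*sqrt(x^4+1)) + (4/3)*x*(integral of 1/sqrt(t^4+1) over (x,oo))`. -/
noncomputable def f (x : ℝ) : ℝ :=
  (2 / 3) * (x ^ 4 - x ^ 2 * Real.sqrt (x ^ 4 + 1))
    + (4 / 3) * x * ∫ t in Set.Ioi x, 1 / Real.sqrt (t ^ 4 + 1)

lemma continuous_integrand : Continuous fun t : ℝ => 1 / √(t ^ 4 + 1) :=
  continuous_const.div (by fun_prop) fun t => by positivity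

lemma integrable_integrand : Integrable fun t : ℝ => 1 / √(t ^ 4 + 1) := by
  refine (integrable_inv_one_add_sq.const_mul 2).mono'
    continuous_integrand.aestronglyMeasurable (ae_of_all _ fun t => ?_)
  rw [Real.norm_of_nonneg (by positivity), ← div_eq_mul_inv,
    div_le_div_iff₀ (by positivity) (by positivity)]
  have h : (1 + t ^ 2) / 2 ≤ √(t ^ 4 + 1) :=
    Real.le_sqrt_of_sq_le (by nlinarith [sq_nonneg (t ^ 2 - 1), sq_nonneg (t ^ 2)])
  linarith

lemma hasDerivAt_tail (x : ℝ) :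
    HasDerivAt (fun y => ∫ t in Set.Ioi y, 1 / √(t ^ 4 + 1)) (-(1 / √(x ^ 4 + 1))) x := by
  have h : (fun y => ∫ t in Set.Ioi y, 1 / √(t ^ 4 + 1)) =
      fun y => (∫ t in Set.Ioi (0 : ℝ), 1 / √(t ^ 4 + 1)) - ∫ t in (0 : ℝ)..y, 1 / √(t ^ 4 + 1) := by
    funext y
    rw [← intervalIntegral.integral_interval_add_Ioi (a := 0) (b := y)
      integrable_integrand.integrableOn integrable_integrand.integrableOn]
    ring
  rw [h]
  exact (intervalIntegral.integral_hasDerivAt_right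
    integrable_integrand.intervalIntegrable
    (continuous_integrand.stronglyMeasurableAtFilter _ _)
    continuous_integrand.continuousAt).const_sub _

lemma hasDerivAt_sqrt_quartic (x : ℝ) :
    HasDerivAt (fun y : ℝ => √(y ^ 4 + 1)) (4 * x ^ 3 / (2 * √(x ^ 4 + 1))) x := by
  have h : HasDerivAt (fun y : ℝ => y ^ 4 + 1) (4 * x ^ 3) x := by
    simpa using (hasDerivAt_pow 4 x).add_const (1 : ℝ)
  exact h.sqrt (by positivity)

lemma hasDerivAt_f (x : ℝ) :
    HasDerivAt f ((8 / 3) * (x ^ 3 - x * √(x ^ 4 + 1))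
      + (4 / 3) * ∫ t in Set.Ioi x, 1 / √(t ^ 4 + 1)) x := by
  have h := (((hasDerivAt_pow 4 x).sub
    ((hasDerivAt_pow 2 x).mul (hasDerivAt_sqrt_quartic x))).const_mul (2 / 3)).add
    (((hasDerivAt_id x).const_mul (4 / 3)).mul (hasDerivAt_tail x))
  refine h.congr_deriv ?_
  have hs : 0 < √(x ^ 4 + 1) := by positivity
  have hs2 : √(x ^ 4 + 1) ^ 2 = x ^ 4 + 1 := Real.sq_sqrt (by positivity)
  generalize √(x ^ 4 + 1) = s at *
  simp only [id]
  field_simp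
  push_cast
  linear_combination (4 * x) * hs2

lemma hasDerivAt_deriv_f (x : ℝ) :
    HasDerivAt (deriv f)
      (8 / √(x ^ 4 + 1) * (x ^ 2 * √(x ^ 4 + 1) - x ^ 4 - 1 / 2)) x := by
  rw [show deriv f = _ from funext fun y => (hasDerivAt_f y).deriv]
  have h := (((hasDerivAt_pow 3 x).sub
    ((hasDerivAt_id x).mul (hasDerivAt_sqrt_quartic x))).const_mul (8 / 3)).add
    ((hasDerivAt_tail x).const_mul (4 / 3))
  refine h.congr_deriv ?_
  have hs : 0 < √(x ^ 4 + 1) := by positivity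
  have hs2 : √(x ^ 4 + 1) ^ 2 = x ^ 4 + 1 := Real.sq_sqrt (by positivity)
  generalize √(x ^ 4 + 1) = s at *
  simp only [id]
  field_simp
  push_cast
  linear_combination (-16) * hs2

lemma deriv_deriv_f_neg (x : ℝ) : deriv (deriv f) x < 0 := by
  rw [(hasDerivAt_deriv_f x).deriv]
  have hs2 : √(x ^ 4 + 1) ^ 2 = x ^ 4 + 1 := Real.sq_sqrt (by positivity)
  have h : x ^ 2 * √(x ^ 4 + 1) < x ^ 4 + 1 / 2 := by
    refine lt_of_pow_lt_pow_left₀ 2 (by positivity) ?_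
    rw [mul_pow, hs2]
    ring_nf
    linarith
  exact mul_neg_of_pos_of_neg (by positivity) (by linarith)

/-- `f` is strictly concave on `(0, oo)`; equivalently its second derivative is
strictly negative there. -/
theorem f_strictConcave :
    StrictConcaveOn ℝ (Set.Ioi (0 : ℝ)) f ∧
    ∀ x : ℝ, 0 < x → deriv (deriv f) x < 0 := by
  refine ⟨strictConcaveOn_of_deriv2_neg (convex_Ioi 0)
    (fun x _ => (hasDerivAt_f x).continuousAt.continuousWithinAt) fun x _ => ?_,
    fun x _ => deriv_deriv_f_neg x⟩
  exact deriv_deriv_f_neg x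
end

section
/- As x → ∞, the quantity x⁴·(1 − f(x)) tends to 1/20. (Equivalently, 1 − f(x) = 1/(20x⁴) + o(x⁻⁴) at infinity.) -/
/-!
With `u = x⁻⁴`, the binomial series give `x² √(x⁴+1) = u⁻¹ + 1/2 - u/8 + O(u²)` and, after
termwise integration of `1/√(t⁴+1) = t⁻² - t⁻⁶/2 + O(t⁻¹⁰)`, also
`x ∫ₓ^∞ dt/√(t⁴+1) = 1 - u/10 + O(u²)`. Hence `1 - f x = (2/15 - 1/12) u + O(u²) = u/20 + O(u²)`.
Both expansions are proved as explicit two-sided polynomial bounds (`sqrt_bounds`,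
`integral_bounds`) for `x ≥ 1`, and the limit follows by squeezing.
-/

open Real MeasureTheory Filter Topology

/-- The truncated binomial series for `√(1+u)`, rescaled by `x⁴ = 1/u`. -/
lemma sqrt_bounds {x : ℝ} (hx : 1 ≤ x) :
    x ^ 4 + 1 / 2 - (1 / x ^ 4) / 8 ≤ x ^ 2 * √(x ^ 4 + 1) ∧
      x ^ 2 * √(x ^ 4 + 1) ≤ x ^ 4 + 1 / 2 - (1 / x ^ 4) / 8 + (1 / x ^ 4) ^ 2 / 16 := by
  have hy : 1 ≤ x ^ 4 := one_le_pow₀ hx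
  have e : x ^ 2 * √(x ^ 4 + 1) = √(x ^ 4 * (x ^ 4 + 1)) := by
    rw [Real.sqrt_mul (by positivity), show x ^ 4 = (x ^ 2) ^ 2 by ring,
      Real.sqrt_sq (by positivity)]
  rw [e]
  generalize x ^ 4 = y at hy
  have hy0 : 0 < y := by linarith
  obtain ⟨u, hu⟩ : ∃ u, u = 1 / y := ⟨_, rfl⟩
  have huy : u * y = 1 := by rw [hu]; field_simp
  have hu0 : 0 < u := by rw [hu]; positivity
  have hu1 : u ≤ 1 := by rw [hu, div_le_one hy0]; exact hy
  rw [← hu]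
  constructor
  · apply Real.le_sqrt_of_sq_le
    have : (y + 1 / 2 - u / 8) ^ 2 = y * (y + 1) - u / 8 + u ^ 2 / 64 := by
      linear_combination (-1 / 4) * huy
    rw [this]
    nlinarith
  · apply Real.sqrt_le_iff.2
    constructor
    · nlinarith [sq_nonneg u]
    · have : (y + 1 / 2 - u / 8 + u ^ 2 / 16) ^ 2
          = y * (y + 1) + 5 / 64 * u ^ 2 - u ^ 3 / 64 + u ^ 4 / 256 := by
        linear_combination (-1 / 4 + u / 8) * huy
      rw [this]
      nlinarith [mul_nonneg (sq_nonneg u) (sub_nonneg.2 hu1), sq_nonneg (u ^ 2)]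

/-- The truncated binomial series for `(1+u)^(-1/2)` at `u = t⁻⁴`, divided by `t²`. -/
lemma integrand_bounds {t : ℝ} (ht : 1 ≤ t) :
    1 / t ^ 2 - 1 / 2 * (1 / t ^ 6) ≤ 1 / √(t ^ 4 + 1) ∧
      1 / √(t ^ 4 + 1) ≤ 1 / t ^ 2 - 1 / 2 * (1 / t ^ 6) + 3 / 8 * (1 / t ^ 10) := by
  have ht0 : 0 < t := by linarith
  obtain ⟨v, hv⟩ : ∃ v, v = 1 / t ^ 2 := ⟨_, rfl⟩
  have hv0 : 0 < v := by rw [hv]; positivity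
  have hv1 : v ≤ 1 := by
    rw [hv, div_le_one (by positivity)]; exact one_le_pow₀ ht
  have h6 : 1 / t ^ 6 = v ^ 3 := by rw [hv]; field_simp
  have h10 : 1 / t ^ 10 = v ^ 5 := by rw [hv]; field_simp
  have h4 : t ^ 4 + 1 = (1 + v ^ 2) / v ^ 2 := by rw [hv]; field_simp
  have hw : 0 < √(1 + v ^ 2) := by positivity
  have hs : 1 / √(t ^ 4 + 1) = v / √(1 + v ^ 2) := by
    rw [h4, Real.sqrt_div (by positivity), Real.sqrt_sq hv0.le, one_div_div]
  rw [hs, h6, h10, ← hv]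
  have hu1 : v ^ 2 ≤ 1 := by nlinarith
  have hu0 : 0 < v ^ 2 := by positivity
  have e1 : v - 1 / 2 * v ^ 3 = v * (1 - v ^ 2 / 2) := by ring
  have e2 : v - 1 / 2 * v ^ 3 + 3 / 8 * v ^ 5 = v * (1 - v ^ 2 / 2 + 3 / 8 * (v ^ 2) ^ 2) := by
    ring
  rw [e2, e1, div_eq_mul_one_div v]
  generalize v ^ 2 = u at *
  have hsq : √(1 + u) ^ 2 = 1 + u := Real.sq_sqrt (by linarith)
  constructor
  · apply mul_le_mul_of_nonneg_left _ hv0.le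
    rw [le_div_iff₀ hw]
    refine le_of_abs_le (abs_le_of_sq_le_sq ?_ zero_le_one)
    rw [mul_pow, hsq]
    nlinarith [mul_nonneg (sq_nonneg u) (sub_nonneg.2 hu1)]
  · apply mul_le_mul_of_nonneg_left _ hv0.le
    have hp : 0 < 1 - u / 2 + 3 / 8 * u ^ 2 := by nlinarith
    rw [div_le_iff₀ hw]
    refine le_of_abs_le (abs_le_of_sq_le_sq ?_ (by positivity))
    rw [mul_pow, hsq]
    have : (1 - u / 2 + 3 / 8 * u ^ 2) ^ 2 * (1 + u)
        = 1 + u ^ 3 * (5 / 8 - 15 / 64 * u + 9 / 64 * u ^ 2) := by ring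
    rw [this]
    have : 0 ≤ u ^ 3 * (5 / 8 - 15 / 64 * u + 9 / 64 * u ^ 2) :=
      mul_nonneg (by positivity) (by nlinarith)
    linarith

lemma integral_Ioi_one_div_pow {x : ℝ} (hx : 0 < x) (n : ℕ) (hn : 1 ≤ n) :
    IntegrableOn (fun t : ℝ => 1 / t ^ (n + 1)) (Set.Ioi x) ∧
      ∫ t in Set.Ioi x, 1 / t ^ (n + 1) = 1 / (n * x ^ n) := by
  have hn' : (1 : ℝ) ≤ n := by exact_mod_cast hn
  have hlt : -((n : ℝ) + 1) < -1 := by linarith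
  have e : Set.EqOn (fun t : ℝ => t ^ (-((n : ℝ) + 1))) (fun t : ℝ => 1 / t ^ (n + 1))
      (Set.Ioi x) := by
    intro t ht
    have ht0 : 0 < t := hx.trans ht
    simp only
    rw [Real.rpow_neg ht0.le, ← Nat.cast_succ, Real.rpow_natCast, one_div]
  refine ⟨(integrableOn_Ioi_rpow_of_lt hlt hx).congr_fun e measurableSet_Ioi, ?_⟩
  rw [← setIntegral_congr_fun measurableSet_Ioi e, integral_Ioi_rpow_of_lt hlt hx,
    show -((n : ℝ) + 1) + 1 = -n by ring, Real.rpow_neg hx.le, Real.rpow_natCast]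
  field_simp

lemma integral_bounds {x : ℝ} (hx : 1 ≤ x) :
    1 / x - 1 / (10 * x ^ 5) ≤ ∫ t in Set.Ioi x, 1 / √(t ^ 4 + 1) ∧
      ∫ t in Set.Ioi x, 1 / √(t ^ 4 + 1) ≤ 1 / x - 1 / (10 * x ^ 5) + 1 / (24 * x ^ 9) := by
  have hx0 : 0 < x := by linarith
  obtain ⟨i2, v2⟩ := integral_Ioi_one_div_pow hx0 1 le_rfl
  obtain ⟨i6, v6⟩ := integral_Ioi_one_div_pow hx0 5 (by norm_num)
  obtain ⟨i10, v10⟩ := integral_Ioi_one_div_pow hx0 9 (by norm_num)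
  norm_num only at i2 v2 i6 v6 i10 v10
  have il : IntegrableOn (fun t : ℝ => 1 / t ^ 2 - 1 / 2 * (1 / t ^ 6)) (Set.Ioi x) :=
    i2.sub (i6.const_mul (1 / 2))
  have iu : IntegrableOn
      (fun t : ℝ => 1 / t ^ 2 - 1 / 2 * (1 / t ^ 6) + 3 / 8 * (1 / t ^ 10)) (Set.Ioi x) :=
    il.add (i10.const_mul (3 / 8))
  have hc : Continuous fun t : ℝ => 1 / √(t ^ 4 + 1) :=
    continuous_const.div (by fun_prop) fun t => by positivity
  have ii : IntegrableOn (fun t : ℝ => 1 / √(t ^ 4 + 1)) (Set.Ioi x) := by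
    refine i2.mono' hc.aestronglyMeasurable ?_
    filter_upwards [ae_restrict_mem measurableSet_Ioi] with t ht
    have ht0 : 0 < t := hx0.trans ht
    rw [Real.norm_of_nonneg (by positivity)]
    apply one_div_le_one_div_of_le (by positivity)
    apply Real.le_sqrt_of_sq_le
    nlinarith
  constructor
  · have h := setIntegral_mono_on il ii measurableSet_Ioi
      fun t ht => (integrand_bounds (hx.trans (le_of_lt ht))).1
    refine le_trans (le_of_eq ?_) h
    rw [integral_sub i2 (i6.const_mul (1 / 2)), integral_const_mul, v2, v6]
    field_simp
    ring
  · have h := setIntegral_mono_on ii iu measurableSet_Ioi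
      fun t ht => (integrand_bounds (hx.trans (le_of_lt ht))).2
    refine le_trans h (le_of_eq ?_)
    rw [integral_add il (i10.const_mul (3 / 8)), integral_sub i2 (i6.const_mul (1 / 2)),
      integral_const_mul, integral_const_mul, v2, v6, v10]
    field_simp
    ring

lemma one_sub_f_bounds {x : ℝ} (hx : 1 ≤ x) :
    1 / 20 - 1 / 18 * (1 / x ^ 4) ≤ x ^ 4 * (1 - f x) ∧
      x ^ 4 * (1 - f x) ≤ 1 / 20 + 1 / 24 * (1 / x ^ 4) := by
  have hx0 : 0 < x := by linarith
  obtain ⟨s1, s2⟩ := sqrt_bounds hx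
  obtain ⟨j1, j2⟩ := integral_bounds hx
  have k1 := mul_le_mul_of_nonneg_left j1 hx0.le
  have k2 := mul_le_mul_of_nonneg_left j2 hx0.le
  have hl : x * (1 / x - 1 / (10 * x ^ 5)) = 1 - (1 / x ^ 4) / 10 := by field_simp
  have hr : x * (1 / x - 1 / (10 * x ^ 5) + 1 / (24 * x ^ 9))
      = 1 - (1 / x ^ 4) / 10 + (1 / x ^ 4) ^ 2 / 24 := by field_simp
  rw [hl] at k1
  rw [hr] at k2
  have hy0 : 0 < x ^ 4 := by positivity
  have hxu : x ^ 4 * (1 / x ^ 4) = 1 := by field_simp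
  unfold f
  rw [mul_assoc (4 / 3) x]
  generalize x ^ 2 * √(x ^ 4 + 1) = S at *
  generalize x * ∫ t in Set.Ioi x, 1 / √(t ^ 4 + 1) = J at *
  generalize 1 / x ^ 4 = u at *
  generalize x ^ 4 = y at *
  constructor
  · have h : u / 20 - u ^ 2 / 18 ≤ 1 - (2 / 3 * (y - S) + 4 / 3 * J) := by linarith
    refine le_trans (le_of_eq ?_) (mul_le_mul_of_nonneg_left h hy0.le)
    linear_combination (-1 / 20 + u / 18) * hxu
  · have h : 1 - (2 / 3 * (y - S) + 4 / 3 * J) ≤ u / 20 + u ^ 2 / 24 := by linarith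
    refine le_trans (mul_le_mul_of_nonneg_left h hy0.le) (le_of_eq ?_)
    linear_combination (1 / 20 + u / 24) * hxu

/-- At infinity, `1 - f x = 1/(20*x^4) + o(x^{-4})`: the quantity `x^4 * (1 - f x)`
tends to `1/20` as `x` tends to infinity. -/
theorem f_expansion_at_infinity :
    Tendsto (fun x : ℝ => x ^ 4 * (1 - f x)) atTop (𝓝 (1 / 20)) := by
  have h0 : Tendsto (fun x : ℝ => 1 / x ^ 4) atTop (𝓝 0) := by
    simp only [one_div]
    exact (tendsto_pow_atTop (α := ℝ) (n := 4) (by norm_num)).inv_tendsto_atTop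
  have hl : Tendsto (fun x : ℝ => 1 / 20 - 1 / 18 * (1 / x ^ 4)) atTop (𝓝 (1 / 20)) := by
    simpa using (h0.const_mul (1 / 18 : ℝ)).const_sub (1 / 20 : ℝ)
  have hr : Tendsto (fun x : ℝ => 1 / 20 + 1 / 24 * (1 / x ^ 4)) atTop (𝓝 (1 / 20)) := by
    simpa using (h0.const_mul (1 / 24 : ℝ)).const_add (1 / 20 : ℝ)
  refine tendsto_of_tendsto_of_tendsto_of_le_of_le' hl hr ?_ ?_
  · filter_upwards [eventually_ge_atTop 1] with x hx using (one_sub_f_bounds hx).1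
  · filter_upwards [eventually_ge_atTop 1] with x hx using (one_sub_f_bounds hx).2
end

section
/- Let c := Γ(1/4)²/(3√π) and let x_s, x_q be real parameters. Then: (i) if x_s > x_q²·c, then g₀₀(x) → −∞ as x → 0⁺; (ii) if x_s < x_q²·c, then g₀₀(x) → +∞ as x → 0⁺; (iii) g₀₀(x) → 1 as x → ∞ for any values of the parameters. -/
/-!
Write `I x = ∫_x^∞ dt/√(t⁴+1)`. For `x ≠ 0`,
`g₀₀ x = 1 + xq² (2/3) (x² - √(x⁴+1)) + x⁻¹ (xq² (4/3) I x - xs)` (`g₀₀_eq`).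
As `x → 0⁺` the first part stays bounded, while the bracket tends to `xq² (4/3) I 0 - xs`, so the
sign of that limit decides the divergence. As `x → ∞`, `x² - √(x⁴+1) → 0` and `I` is bounded, so
only `1` survives.

The constant is `I 0 = Γ(1/4)²/(4√π)` (`tail_zero`). It comes from Fubini applied to
`s^(-1/2) exp(-(t⁴+1)s)` on `(0,∞)²`: integrating in `s` first gives `√π/√(t⁴+1)`, and integrating
in `t` first gives `Γ(5/4) s^(-3/4) exp(-s)`, whose integral is `Γ(5/4) Γ(1/4) = Γ(1/4)²/4`.
-/

open Real MeasureTheory Filter Topology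

/-- The time-time metric component `g₀₀(x) = 1 - x_s/x + (x_q^2/x^2) * f x`
of the Einstein-Born-Infeld black hole, in dimensionless variables. -/
noncomputable def g₀₀ (xs xq : ℝ) (x : ℝ) : ℝ :=
  1 - xs / x + (xq ^ 2 / x ^ 2) * f x

/-- The integrand of the elliptic integral is dominated by `2/(1+t²)`. -/
lemma integrable_inv_sqrt : Integrable (fun t : ℝ => 1 / √(t ^ 4 + 1)) := by
  have hc : Continuous (fun t : ℝ => 1 / √(t ^ 4 + 1)) := by
    refine continuous_const.div (by fun_prop) fun t => ?_
    positivity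
  refine (integrable_inv_one_add_sq.const_mul 2).mono' hc.aestronglyMeasurable (ae_of_all _ ?_)
  intro t
  have h : (1 + t ^ 2) / 2 ≤ √(t ^ 4 + 1) := by
    apply Real.le_sqrt_of_sq_le
    nlinarith [sq_nonneg (t ^ 2 - 1)]
  rw [Real.norm_of_nonneg (by positivity)]
  calc 1 / √(t ^ 4 + 1) ≤ 1 / ((1 + t ^ 2) / 2) := by gcongr
    _ = 2 * (1 + t ^ 2)⁻¹ := by field_simp

/-- The elliptic integral `∫_x^∞ dt/√(t⁴+1)` occurring in `f`. -/
noncomputable def tail (x : ℝ) : ℝ := ∫ t in Set.Ioi x, 1 / √(t ^ 4 + 1)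

/-- The kernel whose two iterated integrals are compared to evaluate `tail 0`. -/
noncomputable def kern (t s : ℝ) : ℝ := s ^ ((1 / 2 : ℝ) - 1) * exp (-((t ^ 4 + 1) * s))

lemma integral_kern_right (t : ℝ) :
    ∫ s in Set.Ioi 0, kern t s = √π * (1 / √(t ^ 4 + 1)) := by
  have h := integral_rpow_mul_exp_neg_mul_Ioi (a := 1 / 2) (r := t ^ 4 + 1)
    (by norm_num) (by positivity)
  simp only [kern]
  rw [h, Real.Gamma_one_half_eq, ← Real.sqrt_eq_rpow, Real.sqrt_div zero_le_one, Real.sqrt_one]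
  ring

lemma integrable_kern_right (t : ℝ) :
    Integrable (fun s => kern t s) (volume.restrict (Set.Ioi 0)) := by
  -- a non-integrable function would have integral `0`
  apply Integrable.of_integral_ne_zero
  rw [integral_kern_right]
  have := Real.pi_pos
  positivity

lemma integral_kern_left {s : ℝ} (hs : 0 < s) :
    ∫ t in Set.Ioi 0, kern t s = Gamma (5 / 4) * (s ^ ((1 / 4 : ℝ) - 1) * exp (-(1 * s))) := by
  have h := integral_exp_neg_mul_rpow (p := 4) (b := s) (by norm_num) hs
  have e : ∀ t : ℝ, kern t s =
      (s ^ ((1 / 2 : ℝ) - 1) * exp (-(1 * s))) * exp (-s * t ^ (4 : ℝ)) := by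
    intro t
    have : t ^ (4 : ℝ) = t ^ 4 := by exact_mod_cast Real.rpow_natCast t 4
    rw [this, kern, mul_assoc, ← Real.exp_add]
    ring_nf
  simp_rw [e]
  rw [integral_const_mul, h]
  have h2 : s ^ ((1 / 4 : ℝ) - 1) = s ^ ((1 / 2 : ℝ) - 1) * s ^ (-1 / 4 : ℝ) := by
    rw [← Real.rpow_add hs]; norm_num
  rw [h2]
  norm_num
  ring

lemma integrable_kern_prod :
    Integrable (Function.uncurry kern)
      ((volume.restrict (Set.Ioi 0)).prod (volume.restrict (Set.Ioi 0))) := by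
  have hm : Measurable (Function.uncurry kern) := by
    unfold Function.uncurry kern
    fun_prop
  rw [integrable_prod_iff hm.aestronglyMeasurable]
  refine ⟨ae_of_all _ integrable_kern_right, ?_⟩
  have e : (fun t : ℝ => ∫ s in Set.Ioi 0, ‖Function.uncurry kern (t, s)‖) =
      fun t => √π * (1 / √(t ^ 4 + 1)) := by
    funext t
    rw [← integral_kern_right]
    refine setIntegral_congr_fun measurableSet_Ioi fun s hs => ?_
    have hs' : (0 : ℝ) < s := hs
    exact Real.norm_of_nonneg (by simp only [Function.uncurry, kern]; positivity)
  rw [e]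
  exact (integrable_inv_sqrt.const_mul _).restrict

lemma tail_zero : tail 0 = Gamma (1 / 4) ^ 2 / (4 * √π) := by
  have h := integral_integral_swap integrable_kern_prod
  simp_rw [integral_kern_right] at h
  rw [integral_const_mul, setIntegral_congr_fun measurableSet_Ioi
    (fun s hs => integral_kern_left hs), integral_const_mul,
    integral_rpow_mul_exp_neg_mul_Ioi (by norm_num) one_pos] at h
  have hG : Gamma (5 / 4) = 1 / 4 * Gamma (1 / 4) := by
    rw [← Real.Gamma_add_one (by norm_num)]; norm_num
  rw [hG] at h
  have hp : 0 < √π := Real.sqrt_pos.2 Real.pi_pos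
  rw [eq_div_iff (by positivity), tail]
  norm_num at h ⊢
  linarith

lemma tail_eq_sub (x : ℝ) : tail x = tail 0 - ∫ t in (0 : ℝ)..x, 1 / √(t ^ 4 + 1) := by
  have h := intervalIntegral.integral_interval_add_Ioi (a := 0) (b := x)
    integrable_inv_sqrt.integrableOn integrable_inv_sqrt.integrableOn
  simp only [tail]
  linarith

lemma continuous_tail : Continuous tail := by
  rw [funext tail_eq_sub]
  exact continuous_const.sub (intervalIntegral.continuous_primitive
    (fun _ _ => integrable_inv_sqrt.intervalIntegrable) 0)

lemma g₀₀_eq (xs xq : ℝ) {x : ℝ} (hx : x ≠ 0) :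
    g₀₀ xs xq x = (1 + xq ^ 2 * (2 / 3 * (x ^ 2 - √(x ^ 4 + 1))))
      + x⁻¹ * (xq ^ 2 * (4 / 3 * tail x) - xs) := by
  simp only [g₀₀, f, tail]
  field_simp
  ring

lemma tendsto_regular (xq : ℝ) :
    Tendsto (fun x : ℝ => 1 + xq ^ 2 * (2 / 3 * (x ^ 2 - √(x ^ 4 + 1)))) (𝓝[>] 0)
      (𝓝 (1 + xq ^ 2 * (2 / 3 * ((0 : ℝ) ^ 2 - √((0 : ℝ) ^ 4 + 1))))) := by
  refine (Continuous.tendsto ?_ (0 : ℝ)).mono_left nhdsWithin_le_nhds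
  fun_prop

lemma tendsto_bracket (xs xq : ℝ) :
    Tendsto (fun x : ℝ => xq ^ 2 * (4 / 3 * tail x) - xs) (𝓝[>] 0)
      (𝓝 (xq ^ 2 * (Gamma (1 / 4) ^ 2 / (3 * √π)) - xs)) := by
  have h0 : Gamma (1 / 4) ^ 2 / (3 * √π) = 4 / 3 * tail 0 := by
    rw [tail_zero]
    have hp : 0 < √π := Real.sqrt_pos.2 Real.pi_pos
    field_simp
  rw [h0]
  have := continuous_tail
  refine (Continuous.tendsto (f := fun x : ℝ => xq ^ 2 * (4 / 3 * tail x) - xs) ?_ (0 : ℝ)).mono_left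
    nhdsWithin_le_nhds
  fun_prop

lemma tendsto_sq_sub_sqrt :
    Tendsto (fun x : ℝ => x ^ 2 - √(x ^ 4 + 1)) atTop (𝓝 0) := by
  have hlim : Tendsto (fun x : ℝ => -(x ^ 2)⁻¹) atTop (𝓝 0) := by
    simpa using (tendsto_inv_atTop_zero.comp (tendsto_pow_atTop (α := ℝ) two_ne_zero)).neg
  refine tendsto_of_tendsto_of_tendsto_of_le_of_le' hlim tendsto_const_nhds ?_ ?_
  · filter_upwards [eventually_gt_atTop 0] with x hx
    have : √(x ^ 4 + 1) ≤ x ^ 2 + (x ^ 2)⁻¹ := by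
      apply Real.sqrt_le_iff.2 ⟨by positivity, ?_⟩
      have h1 : x ^ 2 * (x ^ 2)⁻¹ = 1 := mul_inv_cancel₀ (by positivity)
      nlinarith [sq_nonneg ((x ^ 2)⁻¹)]
    linarith
  · refine Eventually.of_forall fun x => ?_
    have : x ^ 2 ≤ √(x ^ 4 + 1) := Real.le_sqrt_of_sq_le (by nlinarith)
    simpa using this

lemma tail_nonneg (x : ℝ) : 0 ≤ tail x :=
  integral_nonneg fun t => by positivity

lemma tail_le {x : ℝ} (hx : 0 ≤ x) : tail x ≤ tail 0 :=
  setIntegral_mono_set integrable_inv_sqrt.integrableOn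
    (ae_of_all _ fun t => by simp only [Pi.zero_apply]; positivity)
    (Set.Ioi_subset_Ioi hx).eventuallyLE

lemma tendsto_inv_mul_tail : Tendsto (fun x : ℝ => x⁻¹ * tail x) atTop (𝓝 0) := by
  have hlim : Tendsto (fun x : ℝ => x⁻¹ * tail 0) atTop (𝓝 0) := by
    simpa using (tendsto_inv_atTop_zero (𝕜 := ℝ)).mul_const (tail 0)
  refine squeeze_zero' ?_ ?_ hlim
  · filter_upwards [eventually_gt_atTop 0] with x hx
    have := tail_nonneg x
    positivity
  · filter_upwards [eventually_gt_atTop 0] with x hx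
    have := tail_le hx.le
    gcongr

/-- With `c = Gamma(1/4)^2/(3*sqrt(pi))`: (i) if `x_s > x_q^2*c` then `g₀₀` tends to
`-oo` as `x` tends to `0` from the right; (ii) if `x_s < x_q^2*c` then `g₀₀` tends to
`+oo` as `x` tends to `0` from the right; (iii) `g₀₀` tends to `1` at infinity. -/
theorem g₀₀_asymptotics (xs xq : ℝ) :
    (xs > xq ^ 2 * (Real.Gamma (1 / 4) ^ 2 / (3 * Real.sqrt π)) →
      Tendsto (g₀₀ xs xq) (𝓝[>] (0 : ℝ)) atBot) ∧
    (xs < xq ^ 2 * (Real.Gamma (1 / 4) ^ 2 / (3 * Real.sqrt π)) →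
      Tendsto (g₀₀ xs xq) (𝓝[>] (0 : ℝ)) atTop) ∧
    Tendsto (g₀₀ xs xq) atTop (𝓝 1) := by
  have hzero : (fun x : ℝ => (1 + xq ^ 2 * (2 / 3 * (x ^ 2 - √(x ^ 4 + 1))))
      + x⁻¹ * (xq ^ 2 * (4 / 3 * tail x) - xs)) =ᶠ[𝓝[>] 0] g₀₀ xs xq := by
    filter_upwards [self_mem_nhdsWithin] with x hx
    exact (g₀₀_eq xs xq (ne_of_gt hx)).symm
  refine ⟨fun h => ?_, fun h => ?_, ?_⟩
  · refine Tendsto.congr' hzero ?_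
    exact (tendsto_regular xq).add_atBot
      (tendsto_inv_nhdsGT_zero.atTop_mul_neg (sub_neg.2 h) (tendsto_bracket xs xq))
  · refine Tendsto.congr' hzero ?_
    exact (tendsto_regular xq).add_atTop
      (tendsto_inv_nhdsGT_zero.atTop_mul_pos (sub_pos.2 h) (tendsto_bracket xs xq))
  · have h1 := ((tendsto_sq_sub_sqrt.const_mul (2 / 3)).const_mul (xq ^ 2)).const_add 1
    have h2 := (tendsto_inv_mul_tail.const_mul (xq ^ 2 * (4 / 3))).sub
      ((tendsto_inv_atTop_zero (𝕜 := ℝ)).mul_const xs)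
    have h3 := h1.add h2
    simp only [mul_zero, zero_mul, add_zero, sub_zero] at h3
    refine h3.congr' ?_
    filter_upwards [eventually_gt_atTop 0] with x hx
    rw [g₀₀_eq xs xq hx.ne']
    ring
end

section
/- Let x_s > 0, x_q > 0 with x_s² ≥ 4·x_q², and let x_h > x_s/2 satisfy g₀₀(x_h) = 0. Define T(y) := (1/2)·(x_s + √(x_s² − 4·x_q²·f(y))) for y > 0 (well defined since 0 < f < 1), and the sequence x₀ := (1/2)(x_s + √(x_s² − 4x_q²)), x_{k+1} := T(x_k). Then for every k ≥ 0: x_{2k} < x_h < x_{2k+1}, the even-indexed subsequence is strictly increasing (x_{2k} < x_{2k+2}), and the odd-indexed subsequence is strictly decreasing (x_{2k+3} < x_{2k+1}); moreover x₁ < x_s. -/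
/-!
The metric function satisfies `0 < f < 1` on `(0, ∞)` and is strictly increasing. With
`S = √(x⁴+1)` and `I x = ∫_x^∞ dt/√(t⁴+1)` one finds `f' = (4/3) h` where `h = I - 2x(S - x²)`, and
`h' = 6x² - 3(2x⁴+1)/S < 0`. As `h x ≥ -1/x`, a decreasing `h` must be positive (`aux_pos`).
Hence `f` is strictly increasing (`f_strictMono`); `h > 0` also gives `f > 2x²(S - x²) > 0`
(`f_pos`), and the bound `f x ≤ 1 + 1/x²` together with strict monotonicity gives `f < 1`
(`f_lt_one`).

Consequently `T y = (x_s + √(x_s² - 4 x_q² f y))/2` is strictly decreasing on `(0, ∞)`, and `x_h` is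
a fixed point of it. Since `f < 1`, the starting value `x₀` lies strictly below every value of `T`,
in particular below `x_h` and `x₂`; applying the order-reversing map `T` repeatedly propagates all
the inequalities by induction.
-/

open Real MeasureTheory

/-- The tail integral `∫_x^∞ dt/√(t⁴+1)` occurring in `f`. -/
noncomputable def tailInt (x : ℝ) : ℝ := ∫ t in Set.Ioi x, 1 / Real.sqrt (t ^ 4 + 1)

lemma integrand_continuous : Continuous fun t : ℝ => 1 / Real.sqrt (t ^ 4 + 1) := by
  refine Continuous.div continuous_const (by fun_prop) fun t => ?_
  positivity

lemma integrand_integrable : Integrable fun t : ℝ => 1 / Real.sqrt (t ^ 4 + 1) := by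
  refine (integrable_inv_one_add_sq.const_mul 2).mono'
    integrand_continuous.aestronglyMeasurable (Filter.Eventually.of_forall fun t => ?_)
  rw [Real.norm_of_nonneg (by positivity), ← div_eq_mul_inv,
    div_le_div_iff₀ (by positivity) (by positivity)]
  have h : (1 + t ^ 2) / 2 ≤ Real.sqrt (t ^ 4 + 1) := by
    apply Real.le_sqrt_of_sq_le
    nlinarith [sq_nonneg (t ^ 2 - 1), sq_nonneg (t ^ 2)]
  linarith

lemma tailInt_nonneg (x : ℝ) : 0 ≤ tailInt x :=
  integral_nonneg fun t => by positivity

lemma tailInt_le {x : ℝ} (hx : 0 < x) : tailInt x ≤ 1 / x := by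
  have h := integral_Ioi_rpow_of_lt (a := -2) (by norm_num) hx
  have h2 : tailInt x ≤ ∫ t in Set.Ioi x, t ^ (-2 : ℝ) := by
    refine setIntegral_mono_on integrand_integrable.integrableOn
      (integrableOn_Ioi_rpow_of_lt (by norm_num) hx) measurableSet_Ioi fun t ht => ?_
    have ht0 : 0 < t := hx.trans ht
    rw [Real.rpow_neg ht0.le, Real.rpow_two, ← one_div]
    apply one_div_le_one_div_of_le (by positivity)
    apply Real.le_sqrt_of_sq_le
    nlinarith
  rw [h] at h2
  refine h2.trans (le_of_eq ?_)
  norm_num [Real.rpow_neg_one]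

lemma tailInt_hasDerivAt (x : ℝ) :
    HasDerivAt tailInt (-(1 / Real.sqrt (x ^ 4 + 1))) x := by
  have h : tailInt = fun y => tailInt 0 - ∫ t in (0 : ℝ)..y, 1 / Real.sqrt (t ^ 4 + 1) := by
    funext y
    have := intervalIntegral.integral_interval_add_Ioi (a := 0) (b := y)
      integrand_integrable.integrableOn integrand_integrable.integrableOn
    unfold tailInt
    linarith
  rw [h]
  exact (intervalIntegral.integral_hasDerivAt_right
    integrand_integrable.intervalIntegrable
    integrand_continuous.aestronglyMeasurable.stronglyMeasurableAtFilter
    integrand_continuous.continuousAt).const_sub _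

lemma sqrt_hasDerivAt (x : ℝ) :
    HasDerivAt (fun x : ℝ => Real.sqrt (x ^ 4 + 1)) (2 * x ^ 3 / Real.sqrt (x ^ 4 + 1)) x := by
  have h := ((hasDerivAt_pow 4 x).add_const 1).sqrt (by positivity)
  convert h using 1
  field_simp
  push_cast
  ring

/-- The function `h` with `f' = (4/3) h`. -/
noncomputable def aux (x : ℝ) : ℝ := tailInt x - 2 * x * (Real.sqrt (x ^ 4 + 1) - x ^ 2)

lemma aux_hasDerivAt (x : ℝ) :
    HasDerivAt aux (6 * x ^ 2 - 3 * (2 * x ^ 4 + 1) / Real.sqrt (x ^ 4 + 1)) x := by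
  have h := (tailInt_hasDerivAt x).sub (((hasDerivAt_id x).const_mul 2).mul
    ((sqrt_hasDerivAt x).sub (hasDerivAt_pow 2 x)))
  refine HasDerivAt.congr_deriv h ?_
  have hS : Real.sqrt (x ^ 4 + 1) ^ 2 = x ^ 4 + 1 := Real.sq_sqrt (by positivity)
  have hS0 : Real.sqrt (x ^ 4 + 1) ≠ 0 := by positivity
  simp only [id, Pi.sub_apply, Nat.cast_ofNat]
  field_simp
  push_cast
  linear_combination (-2 : ℝ) * hS

lemma aux_strictAnti : StrictAnti aux := by
  apply strictAnti_of_deriv_neg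
  intro x
  rw [(aux_hasDerivAt x).deriv, sub_neg, lt_div_iff₀ (by positivity)]
  have hS : Real.sqrt (x ^ 4 + 1) ^ 2 = x ^ 4 + 1 := Real.sq_sqrt (by positivity)
  have : 2 * x ^ 2 * Real.sqrt (x ^ 4 + 1) < 2 * x ^ 4 + 1 := by
    apply lt_of_pow_lt_pow_left₀ 2 (by positivity)
    rw [mul_pow, hS]
    nlinarith
  linarith

lemma sq_lt_sqrt (x : ℝ) : x ^ 2 < Real.sqrt (x ^ 4 + 1) := by
  apply Real.lt_sqrt_of_sq_lt
  nlinarith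

lemma sqrt_sub_mul (x : ℝ) :
    (Real.sqrt (x ^ 4 + 1) - x ^ 2) * (Real.sqrt (x ^ 4 + 1) + x ^ 2) = 1 := by
  have hS : Real.sqrt (x ^ 4 + 1) ^ 2 = x ^ 4 + 1 := Real.sq_sqrt (by positivity)
  linear_combination hS

lemma aux_ge {x : ℝ} (hx : 0 < x) : -(1 / x) ≤ aux x := by
  have h1 := tailInt_nonneg x
  have h2 := sqrt_sub_mul x
  have h3 := sq_lt_sqrt x
  have h4 : 2 * x * (Real.sqrt (x ^ 4 + 1) - x ^ 2) ≤ 1 / x := by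
    rw [le_div_iff₀ hx]
    nlinarith
  unfold aux
  linarith

lemma aux_pos (x : ℝ) : 0 < aux x := by
  by_contra! hx
  have h1 : aux (x + 1) < 0 := (aux_strictAnti (by linarith)).trans_le hx
  set c := -aux (x + 1) with hc
  have hc0 : 0 < c := by linarith
  -- beyond `1/c` the lower bound `-1/y` exceeds the value `-c` already reached
  have hy1 : x + 1 < max (x + 2) (1 / c) := lt_max_of_lt_left (by linarith)
  have hy2 : 1 / c ≤ max (x + 2) (1 / c) := le_max_right _ _
  have hc1 : 0 < 1 / c := by positivity
  have h3 := aux_ge (hc1.trans_le hy2)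
  have h4 := aux_strictAnti hy1
  have h5 := one_div_le_one_div_of_le hc1 hy2
  rw [one_div_one_div] at h5
  linarith

lemma f_eq (x : ℝ) :
    f x = (2 / 3) * (x ^ 4 - x ^ 2 * Real.sqrt (x ^ 4 + 1)) + (4 / 3) * x * tailInt x := rfl

lemma f_hasDerivAt (x : ℝ) : HasDerivAt f ((4 / 3) * aux x) x := by
  have h := (((hasDerivAt_pow 4 x).sub ((hasDerivAt_pow 2 x).mul (sqrt_hasDerivAt x))).const_mul
    (2 / 3)).add (((hasDerivAt_id x).const_mul (4 / 3)).mul (tailInt_hasDerivAt x))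
  refine HasDerivAt.congr_deriv h ?_
  have hS : Real.sqrt (x ^ 4 + 1) ^ 2 = x ^ 4 + 1 := Real.sq_sqrt (by positivity)
  have hS0 : Real.sqrt (x ^ 4 + 1) ≠ 0 := by positivity
  simp only [id, aux, Nat.cast_ofNat]
  field_simp
  push_cast
  linear_combination (4 * x) * hS

lemma f_strictMono : StrictMono f := by
  apply strictMono_of_deriv_pos
  intro x
  rw [(f_hasDerivAt x).deriv]
  have := aux_pos x
  positivity

lemma f_pos {x : ℝ} (hx : 0 < x) : 0 < f x := by
  have h1 := mul_pos hx (aux_pos x)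
  have h2 := mul_pos (pow_pos hx 2) (sub_pos.2 (sq_lt_sqrt x))
  rw [f_eq]
  unfold aux at h1
  nlinarith

lemma f_le {x : ℝ} (hx : 0 < x) : f x ≤ 1 + 1 / x ^ 2 := by
  have h1 : x * tailInt x ≤ 1 := by
    have := mul_le_mul_of_nonneg_left (tailInt_le hx) hx.le
    rwa [mul_one_div_cancel hx.ne'] at this
  have h2 := sqrt_sub_mul x
  have h3 := sq_lt_sqrt x
  set d := Real.sqrt (x ^ 4 + 1) - x ^ 2 with hd
  have hd0 : 0 < d := sub_pos.2 h3
  have hS : Real.sqrt (x ^ 4 + 1) = d + x ^ 2 := by rw [hd]; ring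
  rw [hS] at h2
  have hx2 : 0 < x ^ 2 := by positivity
  have hu : x ^ 2 * (1 / x ^ 2) = 1 := mul_one_div_cancel hx2.ne'
  have hu0 : 0 < 1 / x ^ 2 := by positivity
  have hdu : d ≤ 1 / x ^ 2 := by
    rw [le_div_iff₀ hx2]
    nlinarith
  have hd1 : d ≤ 1 := by nlinarith
  -- `d (d + 2x²) = 1` turns the algebraic part of `f` into `-(1 - d²)/3`
  rw [f_eq, hS]
  nlinarith

lemma f_lt_one (x : ℝ) : f x < 1 := by
  by_contra! hx
  have h1 : 1 < f (x + 1) := hx.trans_lt (f_strictMono (by linarith))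
  set c := f (x + 1) - 1 with hc
  have hc0 : 0 < c := by linarith
  set y := max (x + 2) (max 1 (1 / c)) with hy
  have hy1 : x + 1 < y := lt_max_of_lt_left (by linarith)
  have hy2 : 1 ≤ y := (le_max_left _ _).trans (le_max_right _ _)
  have hy3 : 1 / c ≤ y := (le_max_right _ _).trans (le_max_right _ _)
  have h3 := f_le (zero_lt_one.trans_le hy2)
  have h4 := f_strictMono hy1
  have h5 : 1 / y ^ 2 ≤ c := by
    rw [div_le_iff₀ (by positivity)]
    rw [div_le_iff₀ hc0] at hy3
    nlinarith [mul_nonneg hc0.le (sub_nonneg.2 hy2)]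
  linarith

/-- The iterative scheme `x₀ = (1/2)(x_s + sqrt(x_s^2 - 4 x_q^2))`, `x_{k+1} = T(x_k)`
with `T y = (1/2)(x_s + sqrt(x_s^2 - 4 x_q^2 f y))` brackets the horizon radius:
even iterates lie below `x_h` and increase strictly, odd iterates lie above `x_h`
and decrease strictly, and `x₁ < x_s`. -/
theorem horizon_iteration (xs xq : ℝ) (hs : 0 < xs) (hq : 0 < xq)
    (hext : xs ^ 2 ≥ 4 * xq ^ 2) (xh : ℝ) (hxh : xh > xs / 2)
    (hzero : g₀₀ xs xq xh = 0)
    (seq : ℕ → ℝ)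
    (hseq0 : seq 0 = (1 / 2) * (xs + Real.sqrt (xs ^ 2 - 4 * xq ^ 2)))
    (hseqS : ∀ k : ℕ,
      seq (k + 1) = (1 / 2) * (xs + Real.sqrt (xs ^ 2 - 4 * xq ^ 2 * f (seq k)))) :
    (∀ k : ℕ, seq (2 * k) < xh ∧ xh < seq (2 * k + 1) ∧
      seq (2 * k) < seq (2 * k + 2) ∧ seq (2 * k + 3) < seq (2 * k + 1)) ∧
    seq 1 < xs := by
  have hq2 : 0 < 4 * xq ^ 2 := by positivity
  -- the discriminant stays strictly above that of `x₀`, so `T` is strictly decreasing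
  have hdisc : ∀ y, xs ^ 2 - 4 * xq ^ 2 < xs ^ 2 - 4 * xq ^ 2 * f y := fun y => by
    nlinarith [mul_lt_mul_of_pos_left (f_lt_one y) hq2]
  have hanti : ∀ y z, y < z →
      (1 / 2) * (xs + Real.sqrt (xs ^ 2 - 4 * xq ^ 2 * f z)) <
        (1 / 2) * (xs + Real.sqrt (xs ^ 2 - 4 * xq ^ 2 * f y)) := fun y z hyz => by
    have h1 := mul_lt_mul_of_pos_left (f_strictMono hyz) hq2
    have h2 := Real.sqrt_lt_sqrt (by linarith [hdisc z])
      (show xs ^ 2 - 4 * xq ^ 2 * f z < xs ^ 2 - 4 * xq ^ 2 * f y by linarith)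
    linarith
  have hlow : ∀ y, seq 0 < (1 / 2) * (xs + Real.sqrt (xs ^ 2 - 4 * xq ^ 2 * f y)) := fun y => by
    have h2 := Real.sqrt_lt_sqrt (by linarith) (hdisc y)
    rw [hseq0]
    linarith
  have hfix : (1 / 2) * (xs + Real.sqrt (xs ^ 2 - 4 * xq ^ 2 * f xh)) = xh := by
    have hxh0 : xh ≠ 0 := by
      have : 0 < xh := by linarith
      exact this.ne'
    unfold g₀₀ at hzero
    field_simp at hzero
    have h1 : xs ^ 2 - 4 * xq ^ 2 * f xh = (2 * xh - xs) ^ 2 := by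
      linear_combination (-4 : ℝ) * hzero
    rw [h1, Real.sqrt_sq (by linarith)]
    ring
  have hstep : ∀ m n, seq m < seq n → seq (n + 1) < seq (m + 1) := fun m n h => by
    rw [hseqS, hseqS]
    exact hanti _ _ h
  have hup : ∀ n, seq n < xh → xh < seq (n + 1) := fun n h => by
    have := hanti _ _ h
    rwa [hfix, ← hseqS] at this
  have hdown : ∀ n, xh < seq n → seq (n + 1) < xh := fun n h => by
    have := hanti _ _ h
    rwa [hfix, ← hseqS] at this
  refine ⟨fun k => ?_, ?_⟩
  · have key : seq (2 * k) < xh ∧ seq (2 * k) < seq (2 * k + 2) := by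
      induction k with
      | zero =>
        refine ⟨(hlow xh).trans_eq hfix, ?_⟩
        have := hlow (seq 1)
        rwa [← hseqS] at this
      | succ k ih =>
        exact ⟨hdown _ (hup _ ih.1), hstep _ _ (hstep _ _ ih.2)⟩
    exact ⟨key.1, hup _ key.1, key.2, hstep _ _ key.2⟩
  · have h0 : 0 < seq 0 := by
      rw [hseq0]
      positivity
    have h1 := mul_pos hq2 (f_pos h0)
    have h2 : Real.sqrt (xs ^ 2 - 4 * xq ^ 2 * f (seq 0)) < xs := by
      rw [Real.sqrt_lt' hs]
      linarith
    rw [hseqS]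
    linarith
end
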